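/- Let α, β, γ ∈ ℂ with none of α, β, γ a nonpositive integer, and let k ∈ (0,1). Define f̃_{m,n} as in the context, with the conventions f̃_{−1,ℓ} := 0 and f̃_{m,n} := 0 for m > n. Then for every n ≥ 1 and every m with 0 ≤ m ≤ n+1: −n(n−1+α)·( f̃_{m,n} − f̃_{m,n−1} ) + (1/k²)·f̃_{m−1,n} + ( (n+β)(n+γ)/k² )·( f̃_{m,n+1} − f̃_{m,n} ) = 0. -/

import Mathlib

/-- The Pochhammer symbol `(x)_n = x(x+1)⋯(x+n-1)`. -/
noncomputable def poch (x : ℂ) (n : ℕ) : ℂ := ∏ i ∈ Finset.range n, (x + (i : ℂ))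

/-- The index set of tuples `(ℓ_1, j_1, …, ℓ_m, j_m)` with
`0 ≤ ℓ_1 ≤ j_1 < ℓ_2 ≤ j_2 < ⋯ < ℓ_m ≤ j_m < n`, encoded as pairs of functions
`(ℓ, j) : (Fin m → Fin n) × (Fin m → Fin n)`. -/
def heunIdx (m n : ℕ) : Finset ((Fin m → Fin n) × (Fin m → Fin n)) :=
  Finset.univ.filter fun p =>
    (∀ s : Fin m, (p.1 s : ℕ) ≤ (p.2 s : ℕ)) ∧
    (∀ s t : Fin m, (s : ℕ) + 1 = (t : ℕ) → (p.2 s : ℕ) < (p.1 t : ℕ))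

/-- The coefficients `f̃_{m,n}` for the case `δ = β + 1`: `f̃_{0,n} = 1`; for
`1 ≤ m ≤ n`, `f̃_{m,n} = (-1)^m Σ ∏_{s=1}^m [j_s!(α)_{j_s}(β)_{ℓ_s}(γ)_{ℓ_s} /
(ℓ_s!(α)_{ℓ_s}(β)_{j_s+1}(γ)_{j_s+1})] k^{2(j_s-ℓ_s)}`, the sum running over
`heunIdx m n`; and `f̃_{m,n} = 0` for `m < 0` or `m > n`. -/
noncomputable def heunft (k : ℝ) (α β γ : ℂ) (m : ℤ) (n : ℕ) : ℂ :=
  if m = 0 then 1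
  else if m < 0 ∨ (n : ℤ) < m then 0
  else (-1 : ℂ) ^ m.toNat *
    ∑ p ∈ heunIdx m.toNat n, ∏ s : Fin m.toNat,
      ((Nat.factorial (p.2 s : ℕ) : ℂ) * poch α (p.2 s : ℕ) * poch β (p.1 s : ℕ) *
          poch γ (p.1 s : ℕ)) /
        ((Nat.factorial (p.1 s : ℕ) : ℂ) * poch α (p.1 s : ℕ) * poch β ((p.2 s : ℕ) + 1) *
          poch γ ((p.2 s : ℕ) + 1)) *
      (k : ℂ) ^ ((2 : ℤ) * (((p.2 s : ℕ) : ℤ) - ((p.1 s : ℕ) : ℤ)))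

/-- The Taylor coefficients `c̃_n = ((β)_n / n!) Σ_{m=0}^n f̃_{m,n} wᵐ` of the local
Heun solution for `δ = β + 1`. -/
noncomputable def heunct (k : ℝ) (α β γ w : ℂ) (n : ℕ) : ℂ :=
  poch β n / (Nat.factorial n : ℂ) *
    ∑ m ∈ Finset.range (n + 1), heunft k α β γ (m : ℤ) n * w ^ m

noncomputable def heunW (k : ℝ) (α β γ : ℂ) (l j : ℕ) : ℂ :=
  ((Nat.factorial j : ℂ) * poch α j * poch β l * poch γ l) /
        ((Nat.factorial l : ℂ) * poch α l * poch β (j + 1) * poch γ (j + 1)) *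
      (k : ℂ) ^ ((2 : ℤ) * ((j : ℤ) - (l : ℤ)))

noncomputable def heunS (W : ℕ → ℕ → ℂ) (m n : ℕ) : ℂ :=
  ∑ p ∈ heunIdx m n, ∏ s : Fin m, W (p.1 s : ℕ) (p.2 s : ℕ)

lemma heunIdx_lower {m n : ℕ} {p : (Fin m → Fin n) × (Fin m → Fin n)} (hp : p ∈ heunIdx m n) :
    ∀ (i : ℕ) (hi : i < m), i ≤ (p.2 ⟨i, hi⟩ : ℕ) := by
  simp only [heunIdx, Finset.mem_filter, Finset.mem_univ, true_and] at hp
  intro i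
  induction i with
  | zero => intro hi; exact Nat.zero_le _
  | succ i ih =>
    intro hi
    have h1 := ih (by omega)
    have h2 := hp.2 ⟨i, by omega⟩ ⟨i + 1, hi⟩ rfl
    have h3 := hp.1 ⟨i + 1, hi⟩
    omega

lemma heunIdx_upper {m n : ℕ} {p : (Fin (m+1) → Fin n) × (Fin (m+1) → Fin n)}
    (hp : p ∈ heunIdx (m+1) n) :
    ∀ (d i : ℕ) (hi : i + d + 1 = m),
      (p.2 ⟨i, by omega⟩ : ℕ) < (p.1 (Fin.last m) : ℕ) := by
  simp only [heunIdx, Finset.mem_filter, Finset.mem_univ, true_and] at hp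
  intro d
  induction d with
  | zero => intro i hi; exact hp.2 _ _ (by simpa using hi)
  | succ d ih =>
    intro i hi
    have h1 := ih (i + 1) (by omega)
    have h2 := hp.2 ⟨i, by omega⟩ ⟨i + 1, by omega⟩ rfl
    have h3 := hp.1 ⟨i + 1, by omega⟩
    omega

lemma heunS_eq_zero (W : ℕ → ℕ → ℂ) {m n : ℕ} (h : n < m) : heunS W m n = 0 := by
  unfold heunS
  apply Finset.sum_eq_zero
  intro p hp
  have h1 := heunIdx_lower hp n h
  have h2 := (p.2 ⟨n, h⟩).isLt
  omega

lemma heunS_zero (W : ℕ → ℕ → ℂ) (n : ℕ) : heunS W 0 n = 1 := by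
  have : heunIdx 0 n = Finset.univ := by
    ext p; simp [heunIdx]
  simp [heunS, this]

lemma heunft_eq (k : ℝ) (α β γ : ℂ) (m n : ℕ) :
    heunft k α β γ (m : ℤ) n = (-1) ^ m * heunS (heunW k α β γ) m n := by
  unfold heunft
  split_ifs with h1 h2
  · have : m = 0 := by omega
    subst this
    simp [heunS_zero]
  · rw [heunS_eq_zero _ (by omega)]; simp
  · rfl

lemma heunS_succ (W : ℕ → ℕ → ℂ) (m n : ℕ) :
    heunS W (m + 1) n =
      ∑ j ∈ Finset.range n, ∑ l ∈ Finset.range (j + 1), W l j * heunS W m l := by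
  have hs : (∑ j ∈ Finset.range n, ∑ l ∈ Finset.range (j + 1), W l j * heunS W m l) =
      ∑ x ∈ ((Finset.univ : Finset (Fin n × Fin n)).filter
          (fun q => (q.2 : ℕ) ≤ q.1)).sigma (fun q => heunIdx m (q.2 : ℕ)),
        W x.1.2 x.1.1 * ∏ s : Fin m, W (x.2.1 s : ℕ) (x.2.2 s : ℕ) := by
    rw [Finset.sum_sigma, Finset.sum_filter, Fintype.sum_prod_type, Finset.sum_range]
    refine Finset.sum_congr rfl fun j _ => ?_
    rw [← Finset.sum_filter]
    simp only [heunS, Finset.mul_sum]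
    symm
    refine Finset.sum_bij (fun l _ => (l : ℕ)) ?_ ?_ ?_ ?_
    · intro l hl
      simp only [Finset.mem_filter, Finset.mem_univ, true_and, Finset.mem_range] at hl ⊢
      omega
    · intro a _ b _ h; exact Fin.ext h
    · intro b hb
      have := j.isLt
      rw [Finset.mem_range] at hb
      refine ⟨⟨b, by omega⟩, ?_, rfl⟩
      simp only [Finset.mem_filter, Finset.mem_univ, true_and]
      omega
    · intro l hl; rfl
  rw [hs]
  symm
  unfold heunS
  refine Finset.sum_bij (fun x _ =>
    (Fin.snoc (α := fun _ => Fin n) (fun s => Fin.castLE x.1.2.isLt.le (x.2.1 s)) x.1.2,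
     Fin.snoc (α := fun _ => Fin n) (fun s => Fin.castLE x.1.2.isLt.le (x.2.2 s)) x.1.1))
    ?_ ?_ ?_ ?_
  · rintro ⟨⟨j, l⟩, p⟩ hx
    simp only [heunIdx, Finset.mem_sigma, Finset.mem_filter, Finset.mem_univ, true_and] at hx ⊢
    obtain ⟨hjl, hp1, hp2⟩ := hx
    constructor
    · intro s
      refine Fin.lastCases ?_ (fun s => ?_) s
      · simpa using hjl
      · simpa using hp1 s
    · intro s t
      refine Fin.lastCases ?_ (fun s => ?_) s
      · intro h; have := t.isLt; simp at h; omega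
      · refine Fin.lastCases ?_ (fun t => ?_) t
        · intro h; simp
        · intro h; simpa using hp2 s t (by simpa using h)
  · rintro ⟨⟨j, l⟩, p⟩ hx ⟨⟨j', l'⟩, p'⟩ hx' h
    simp only [Prod.mk.injEq] at h
    obtain ⟨h1, h2⟩ := h
    have hl : l = l' := by simpa using congrFun h1 (Fin.last m)
    have hj : j = j' := by simpa using congrFun h2 (Fin.last m)
    subst hl hj
    have hp : p = p' := by
      refine Prod.ext (funext fun s => ?_) (funext fun s => ?_)
      · simpa using congrFun h1 s.castSucc
      · simpa using congrFun h2 s.castSucc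
    rw [hp]
  · intro p hp
    have hu := heunIdx_upper hp
    have hp' := hp
    simp only [heunIdx, Finset.mem_filter, Finset.mem_univ, true_and] at hp'
    have h2 : ∀ s : Fin m, (p.2 s.castSucc : ℕ) < (p.1 (Fin.last m) : ℕ) := fun s =>
      hu (m - 1 - s) s (by have := s.isLt; omega)
    have h1 : ∀ s : Fin m, (p.1 s.castSucc : ℕ) < (p.1 (Fin.last m) : ℕ) := fun s =>
      lt_of_le_of_lt (hp'.1 _) (h2 s)
    refine ⟨⟨(p.2 (Fin.last m), p.1 (Fin.last m)),
      (fun s => ⟨p.1 s.castSucc, h1 s⟩, fun s => ⟨p.2 s.castSucc, h2 s⟩)⟩, ?_, ?_⟩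
    · simp only [heunIdx, Finset.mem_sigma, Finset.mem_filter, Finset.mem_univ, true_and]
      refine ⟨hp'.1 _, fun s => hp'.1 _, fun s t h => hp'.2 _ _ (by simpa using h)⟩
    · refine Prod.ext (funext fun s => ?_) (funext fun s => ?_)
      · refine Fin.lastCases ?_ (fun s => ?_) s
        · simp
        · apply Fin.ext; simp
      · refine Fin.lastCases ?_ (fun s => ?_) s
        · simp
        · apply Fin.ext; simp
  · rintro ⟨⟨j, l⟩, p⟩ hx
    rw [Fin.prod_univ_castSucc, mul_comm]
    simp

lemma poch_ne {x : ℂ} (hx : ∀ j : ℕ, x ≠ -(j : ℂ)) (n : ℕ) : poch x n ≠ 0 := by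
  unfold poch
  refine Finset.prod_ne_zero_iff.mpr fun i _ h => hx i (eq_neg_of_add_eq_zero_left h)

lemma poch_succ (x : ℂ) (n : ℕ) : poch x (n + 1) = poch x n * (x + n) := by
  unfold poch
  rw [Finset.prod_range_succ]

/-- The combined difference identity
`-n(n-1+α)(f̃_{m,n} - f̃_{m,n-1}) + (1/k²) f̃_{m-1,n}
+ ((n+β)(n+γ)/k²)(f̃_{m,n+1} - f̃_{m,n}) = 0` for `n ≥ 1`, `0 ≤ m ≤ n+1`. -/
theorem heunft_combined_difference_identity (k : ℝ) (hk0 : 0 < k) (hk1 : k < 1)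
    (α β γ : ℂ)
    (hα : ∀ j : ℕ, α ≠ -(j : ℂ)) (hβ : ∀ j : ℕ, β ≠ -(j : ℂ))
    (hγ : ∀ j : ℕ, γ ≠ -(j : ℂ)) :
    ∀ n : ℕ, 1 ≤ n → ∀ m : ℕ, m ≤ n + 1 →
      -(n : ℂ) * ((n : ℂ) - 1 + α) *
          (heunft k α β γ (m : ℤ) n - heunft k α β γ (m : ℤ) (n - 1)) +
        1 / (k : ℂ) ^ 2 * heunft k α β γ ((m : ℤ) - 1) n +
        ((n : ℂ) + β) * ((n : ℂ) + γ) / (k : ℂ) ^ 2 *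
          (heunft k α β γ (m : ℤ) (n + 1) - heunft k α β γ (m : ℤ) n) = 0 := by
  intro n hn m hm
  have hk : (k : ℂ) ≠ 0 := by exact_mod_cast hk0.ne'
  obtain ⟨n, rfl⟩ : ∃ n', n = n' + 1 := ⟨n - 1, by omega⟩
  rcases m with _ | m
  · simp [heunft]
  have e : (((m + 1 : ℕ) : ℤ) - 1) = (m : ℤ) := by push_cast; ring
  rw [e]
  simp only [heunft_eq, Nat.add_sub_cancel]
  set W := heunW k α β γ with hW
  have hb : β + ((n + 1 : ℕ) : ℂ) ≠ 0 := fun h => hβ (n + 1) (eq_neg_of_add_eq_zero_left h)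
  have hc : γ + ((n + 1 : ℕ) : ℂ) ≠ 0 := fun h => hγ (n + 1) (eq_neg_of_add_eq_zero_left h)
  have hdiag : W (n + 1) (n + 1) * ((β + ((n + 1 : ℕ) : ℂ)) * (γ + ((n + 1 : ℕ) : ℂ))) = 1 := by
    have h1 := poch_ne hα (n + 1)
    have h2 := poch_ne hβ (n + 1)
    have h3 := poch_ne hγ (n + 1)
    have h4 : ((n + 1).factorial : ℂ) ≠ 0 := by exact_mod_cast Nat.factorial_ne_zero _
    simp only [hW, heunW, poch_succ _ (n + 1), sub_self, mul_zero, zpow_zero]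
    field_simp
  have hstep : ∀ l, W l (n + 1) * ((β + ((n + 1 : ℕ) : ℂ)) * (γ + ((n + 1 : ℕ) : ℂ))) =
      W l n * (((n + 1 : ℕ) : ℂ) * (α + n) * (k : ℂ) ^ 2) := by
    intro l
    have h1 := poch_ne hα l
    have h2 := poch_ne hβ (n + 1)
    have h3 := poch_ne hγ (n + 1)
    have h4 : (l.factorial : ℂ) ≠ 0 := by exact_mod_cast Nat.factorial_ne_zero _
    have h5 : (k : ℂ) ^ ((2 : ℤ) * (((n + 1 : ℕ) : ℤ) - (l : ℤ))) =
        (k : ℂ) ^ ((2 : ℤ) * ((n : ℤ) - (l : ℤ))) * (k : ℂ) ^ 2 := by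
      rw [← zpow_natCast, ← zpow_add₀ hk]
      congr 1
      push_cast; ring
    simp only [hW, heunW]
    rw [h5, poch_succ β (n + 1), poch_succ γ (n + 1), poch_succ α n, Nat.factorial_succ,
      Nat.cast_mul]
    field_simp
  have hD : heunS W (m + 1) (n + 1) - heunS W (m + 1) n =
      ∑ l ∈ Finset.range (n + 1), W l n * heunS W m l := by
    rw [heunS_succ, heunS_succ, Finset.sum_range_succ]; ring
  have hD' : heunS W (m + 1) (n + 1 + 1) - heunS W (m + 1) (n + 1) =
      ∑ l ∈ Finset.range (n + 1 + 1), W l (n + 1) * heunS W m l := by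
    rw [heunS_succ, heunS_succ, Finset.sum_range_succ _ (n + 1)]; ring
  have key : ((β + ((n + 1 : ℕ) : ℂ)) * (γ + ((n + 1 : ℕ) : ℂ))) *
      (heunS W (m + 1) (n + 1 + 1) - heunS W (m + 1) (n + 1)) =
      heunS W m (n + 1) + ((n + 1 : ℕ) : ℂ) * (α + n) * (k : ℂ) ^ 2 *
        (heunS W (m + 1) (n + 1) - heunS W (m + 1) n) := by
    rw [hD, hD', Finset.sum_range_succ, mul_add, Finset.mul_sum, Finset.mul_sum, add_comm]
    congr 1
    · linear_combination heunS W m (n + 1) * hdiag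
    · refine Finset.sum_congr rfl fun l _ => ?_
      linear_combination heunS W m l * hstep l
  push_cast at key ⊢
  field_simp
  rw [pow_succ]
  linear_combination (-(-1 : ℂ) ^ m) * key
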